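/- Let d ≥ 1 be an integer and s > d/2. Then there exists a constant C = C(d, s) > 0 such that for all u, v : ℤ^d → ℂ with ‖u‖_{ℓ²_s} < ∞ and ‖v‖_{ℓ²_s} < ∞, the convolution u*v satisfies ‖u*v‖_{ℓ²_s} ≤ C ‖u‖_{ℓ²_s} ‖v‖_{ℓ²_s}. (This is the multiplicative property of the Sobolev space H^s(𝕋^d) for s > d/2, expressed on the Fourier side: the Fourier coefficients of a product of two H^s functions are the convolution of their Fourier coefficients.) -/

import Mathlib

/-- Euclidean norm of a lattice point `n ∈ ℤ^d`, viewed as a vector in `ℝ^d`. -/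
noncomputable def latNorm {d : ℕ} (n : Fin d → ℤ) : ℝ :=
  Real.sqrt (∑ i, ((n i : ℝ)) ^ 2)

lemma latNorm_nonneg {d : ℕ} (n : Fin d → ℤ) : 0 ≤ latNorm n := Real.sqrt_nonneg _

lemma latNorm_eq {d : ℕ} (n : Fin d → ℤ) :
    latNorm n = ‖(WithLp.toLp 2 (fun i => (n i : ℝ)) : EuclideanSpace ℝ (Fin d))‖ := by
  simp [latNorm, EuclideanSpace.norm_eq]

lemma latNorm_triangle {d : ℕ} (n m : Fin d → ℤ) :
    latNorm n ≤ latNorm (n - m) + latNorm m := by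
  rw [latNorm_eq, latNorm_eq, latNorm_eq]
  refine le_trans (le_of_eq ?_) (norm_add_le _ _)
  congr 1
  ext i
  simp

lemma norm_le_latNorm {d : ℕ} (n : Fin d → ℤ) : ‖(fun i => (n i : ℝ))‖ ≤ latNorm n := by
  rw [pi_norm_le_iff_of_nonneg (latNorm_nonneg n)]
  intro i
  rw [latNorm]
  apply Real.le_sqrt_of_sq_le
  rw [Real.norm_eq_abs, sq_abs]
  exact Finset.single_le_sum (f := fun i => (n i : ℝ) ^ 2) (fun _ _ => sq_nonneg _)
    (Finset.mem_univ i)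

lemma summable_weight (d : ℕ) (s : ℝ) (hs : (d : ℝ) / 2 < s) :
    Summable fun n : Fin d → ℤ => (((1 + latNorm n) ^ s)⁻¹) ^ 2 := by
  let b := Pi.basisFun ℝ (Fin d)
  let L := Submodule.span ℤ (Set.range b)
  have h1 := ZLattice.summable_norm_rpow L (-(2 * s)) (by
    have : Module.finrank ℤ L = d := by
      rw [ZLattice.rank ℝ L]; simp
    rw [this]; linarith)
  let e : (Fin d → ℤ) ≃ L := ((b.restrictScalars ℤ).equivFun.symm).toEquiv
  have h2 := (e.summable_iff).2 h1
  have he : ∀ n, ((e n : L) : Fin d → ℝ) = fun i => (n i : ℝ) := by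
    intro n
    simp only [e, LinearEquiv.coe_toEquiv, Module.Basis.equivFun_symm_apply]
    ext i
    simp [b, Pi.single_apply, Finset.sum_apply]
  refine Summable.of_norm_bounded_eventually h2 ?_
  rw [Filter.eventually_cofinite]
  refine (Set.finite_singleton (0 : Fin d → ℤ)).subset ?_
  intro n hn
  by_contra hne
  apply hn
  have hne : n ≠ 0 := hne
  have hpos : 0 < ‖(fun i => (n i : ℝ))‖ := by
    rw [norm_pos_iff]
    intro h
    apply hne
    ext i
    have := congrFun h i
    simpa using this
  have hN := latNorm_nonneg n
  have hb := norm_le_latNorm n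
  have hs0 : 0 < s := lt_of_le_of_lt (by positivity) hs
  simp only [Function.comp]
  rw [show ‖e n‖ = ‖(fun i => (n i : ℝ))‖ from congrArg norm (he n), Real.norm_of_nonneg (by positivity), inv_pow, ← Real.rpow_mul_natCast (by positivity),
    Real.rpow_neg (by positivity), mul_comm s]
  push_cast
  gcongr
  linarith

lemma weight_le {d : ℕ} (s : ℝ) (hs : 0 < s) (n m : Fin d → ℤ) :
    ((1 + latNorm n) ^ s) ^ 2 ≤ ((2 : ℝ) ^ s) ^ 2 *
      (((1 + latNorm (n - m)) ^ s) ^ 2 + ((1 + latNorm m) ^ s) ^ 2) := by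
  have h := latNorm_triangle n m
  have h0 := latNorm_nonneg n
  have h1 := latNorm_nonneg (n - m)
  have h2 := latNorm_nonneg m
  rcases le_total (latNorm (n - m)) (latNorm m) with hc | hc
  · have : (1 + latNorm n) ^ s ≤ 2 ^ s * (1 + latNorm m) ^ s := by
      rw [← Real.mul_rpow (by norm_num) (by linarith)]
      exact Real.rpow_le_rpow (by linarith) (by linarith) hs.le
    calc _ ≤ (2 ^ s * (1 + latNorm m) ^ s) ^ 2 := by gcongr
      _ ≤ _ := by rw [mul_pow]; gcongr; have := sq_nonneg ((1 + latNorm (n-m)) ^ s); linarith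
  · have : (1 + latNorm n) ^ s ≤ 2 ^ s * (1 + latNorm (n - m)) ^ s := by
      rw [← Real.mul_rpow (by norm_num) (by linarith)]
      exact Real.rpow_le_rpow (by linarith) (by linarith) hs.le
    calc _ ≤ (2 ^ s * (1 + latNorm (n - m)) ^ s) ^ 2 := by gcongr
      _ ≤ _ := by rw [mul_pow]; gcongr; have := sq_nonneg ((1 + latNorm m) ^ s); linarith

/-- Abstract weighted convolution estimate. -/
lemma conv_est {G : Type*} [AddCommGroup G] (w : G → ℝ) (hw : ∀ n, 0 < w n) (A : ℝ) (hA : 0 < A)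
    (hle : ∀ n m, w n ^ 2 ≤ A * (w (n - m) ^ 2 + w m ^ 2))
    (hS : Summable fun n => ((w n)⁻¹) ^ 2) (u v : G → ℂ)
    (hu : Summable fun n => w n ^ 2 * ‖u n‖ ^ 2) (hv : Summable fun n => w n ^ 2 * ‖v n‖ ^ 2) :
    (∀ n, Summable fun m => ‖u (n - m) * v m‖) ∧
    (Summable fun n => w n ^ 2 * ‖∑' m, u (n - m) * v m‖ ^ 2) ∧
    ∑' n, w n ^ 2 * ‖∑' m, u (n - m) * v m‖ ^ 2 ≤
      (2 * A * ∑' n, ((w n)⁻¹) ^ 2) * (∑' n, w n ^ 2 * ‖u n‖ ^ 2) * ∑' n, w n ^ 2 * ‖v n‖ ^ 2 := by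
  set U : G → ℝ := fun n => w n ^ 2 * ‖u n‖ ^ 2 with hU
  set V : G → ℝ := fun n => w n ^ 2 * ‖v n‖ ^ 2 with hV
  set S := ∑' n, ((w n)⁻¹) ^ 2 with hSdef
  have hU0 : ∀ n, 0 ≤ U n := fun n => by positivity
  have hV0 : ∀ n, 0 ≤ V n := fun n => by positivity
  have hS0 : 0 ≤ S := tsum_nonneg fun n => by positivity
  let e : G × G ≃ G × G :=
    { toFun := fun p => (p.1 - p.2, p.2)
      invFun := fun p => (p.1 + p.2, p.2)
      left_inv := fun p => by simp
      right_inv := fun p => by simp }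
  have hP : Summable fun p : G × G => U p.1 * V p.2 := hu.mul_of_nonneg hv hU0 hV0
  have hQ : Summable fun p : G × G => U (p.1 - p.2) * V p.2 := (e.summable_iff).2 hP
  have hconv : ∀ n, Summable fun m => U (n - m) * V m := fun n => hQ.prod_factor n
  have hconvS : Summable fun n => ∑' m, U (n - m) * V m := hQ.prod
  have hconvT : ∑' n, ∑' m, U (n - m) * V m = (∑' n, U n) * ∑' n, V n := by
    rw [hu.tsum_mul_tsum hv hP, ← e.tsum_eq (fun p : G × G => U p.1 * V p.2)]
    exact (hQ.tsum_prod).symm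
  have hSn : ∀ n, Summable fun m => ((w (n - m))⁻¹) ^ 2 := fun n =>
    ((Equiv.subLeft n).summable_iff (f := fun m => ((w m)⁻¹) ^ 2)).2 hS
  have hSnT : ∀ n, ∑' m, ((w (n - m))⁻¹) ^ 2 = S := fun n =>
    (Equiv.subLeft n).tsum_eq (fun m => ((w m)⁻¹) ^ 2)
  have key : ∀ n m, ((w (n - m))⁻¹ * (w m)⁻¹) ^ 2 ≤
      (w n ^ 2)⁻¹ * A * (((w (n - m))⁻¹) ^ 2 + ((w m)⁻¹) ^ 2) := by
    intro n m
    have h1 := hw n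
    have h2 := hw (n - m)
    have h3 := hw m
    have h := hle n m
    have : (w (n - m))⁻¹ ^ 2 + (w m)⁻¹ ^ 2 =
       (w (n - m) ^ 2 + w m ^ 2) * ((w (n - m))⁻¹ * (w m)⁻¹) ^ 2 := by
      field_simp; ring
    rw [this, ← mul_assoc]
    apply le_mul_of_one_le_left (by positivity)
    rw [mul_assoc, inv_mul_eq_div, one_le_div (by positivity)]
    exact h
  have hF : ∀ n, Summable fun m => ((w (n - m))⁻¹ * (w m)⁻¹) ^ 2 := fun n =>
    Summable.of_nonneg_of_le (fun m => sq_nonneg _) (key n) (((hSn n).add hS).mul_left _)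
  have hFT : ∀ n, ∑' m, ((w (n - m))⁻¹ * (w m)⁻¹) ^ 2 ≤ (w n ^ 2)⁻¹ * (2 * A * S) := by
    intro n
    refine ((hF n).tsum_le_tsum (key n) (((hSn n).add hS).mul_left _)).trans (le_of_eq ?_)
    rw [tsum_mul_left, (hSn n).tsum_add hS, hSnT]
    ring
  have hGeq : ∀ n m, (w (n - m) * ‖u (n - m)‖ * (w m * ‖v m‖)) ^ 2 = U (n - m) * V m := by
    intro n m; simp only [hU, hV]; ring
  have hfg : ∀ n m, ((w (n - m))⁻¹ * (w m)⁻¹) * (w (n - m) * ‖u (n - m)‖ * (w m * ‖v m‖))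
      = ‖u (n - m) * v m‖ := by
    intro n m
    have h2 := hw (n - m)
    have h3 := hw m
    rw [norm_mul]
    field_simp
  have cs := fun n => Real.summable_and_inner_le_Lp_mul_Lq_tsum_of_nonneg (p := 2) (q := 2)
    (f := fun m => (w (n - m))⁻¹ * (w m)⁻¹)
    (g := fun m => w (n - m) * ‖u (n - m)‖ * (w m * ‖v m‖)) Real.HolderConjugate.two_two
    (fun m => by have h2 := hw (n - m); have h3 := hw m; positivity)
    (fun m => by have h2 := hw (n - m); have h3 := hw m; positivity)
    (by simpa only [Real.rpow_two] using hF n)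
    (by simpa only [Real.rpow_two, hGeq] using hconv n)
  simp only [Real.rpow_two, hGeq, hfg, ← Real.sqrt_eq_rpow] at cs
  have hpt : ∀ n, w n ^ 2 * ‖∑' m, u (n - m) * v m‖ ^ 2 ≤
      (2 * A * S) * ∑' m, U (n - m) * V m := by
    intro n
    have hwn := hw n
    have hc0 : 0 ≤ ∑' m, U (n - m) * V m := tsum_nonneg fun m => mul_nonneg (hU0 _) (hV0 _)
    have h1 : ‖∑' m, u (n - m) * v m‖ ^ 2 ≤
        ((w n ^ 2)⁻¹ * (2 * A * S)) * ∑' m, U (n - m) * V m := by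
      calc _ ≤ (√(∑' m, ((w (n - m))⁻¹ * (w m)⁻¹) ^ 2) * √(∑' m, U (n - m) * V m)) ^ 2 := by
            gcongr
            exact (norm_tsum_le_tsum_norm (cs n).1).trans (cs n).2
        _ = (∑' m, ((w (n - m))⁻¹ * (w m)⁻¹) ^ 2) * ∑' m, U (n - m) * V m := by
            rw [mul_pow, Real.sq_sqrt (tsum_nonneg fun m => sq_nonneg _), Real.sq_sqrt hc0]
        _ ≤ _ := by gcongr; exact hFT n
    calc _ ≤ w n ^ 2 * (((w n ^ 2)⁻¹ * (2 * A * S)) * ∑' m, U (n - m) * V m) := by gcongr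
      _ = _ := by field_simp
  have hsum : Summable fun n => w n ^ 2 * ‖∑' m, u (n - m) * v m‖ ^ 2 :=
    Summable.of_nonneg_of_le (fun n => by positivity) hpt (hconvS.mul_left _)
  refine ⟨fun n => (cs n).1, hsum, ?_⟩
  refine (hsum.tsum_le_tsum hpt (hconvS.mul_left _)).trans (le_of_eq ?_)
  rw [tsum_mul_left, hconvT]
  ring

/-- For `d ≥ 1` and `s > d/2` there is a constant `C = C(d, s) > 0` such that
for all `u, v : ℤ^d → ℂ` with finite `ℓ²_s`-norms, the convolution `u*v` (which converges
absolutely at every point) satisfies `‖u*v‖_{ℓ²_s} ≤ C ‖u‖_{ℓ²_s} ‖v‖_{ℓ²_s}`.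
This is the multiplicative property of `H^s(𝕋^d)`, `s > d/2`, on the Fourier side. -/
theorem stmt3 (d : ℕ) (hd : 1 ≤ d) (s : ℝ) (hs : (d : ℝ) / 2 < s) :
    ∃ C : ℝ, 0 < C ∧ ∀ u v : (Fin d → ℤ) → ℂ,
      (Summable fun n : Fin d → ℤ => (1 + latNorm n) ^ (2 * s) * ‖u n‖ ^ 2) →
      (Summable fun n : Fin d → ℤ => (1 + latNorm n) ^ (2 * s) * ‖v n‖ ^ 2) →
      (∀ n : Fin d → ℤ, Summable fun m : Fin d → ℤ => ‖u (n - m) * v m‖) ∧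
      (Summable fun n : Fin d → ℤ =>
        (1 + latNorm n) ^ (2 * s) * ‖∑' m : Fin d → ℤ, u (n - m) * v m‖ ^ 2) ∧
      Real.sqrt (∑' n : Fin d → ℤ,
          (1 + latNorm n) ^ (2 * s) * ‖∑' m : Fin d → ℤ, u (n - m) * v m‖ ^ 2)
        ≤ C * Real.sqrt (∑' n : Fin d → ℤ, (1 + latNorm n) ^ (2 * s) * ‖u n‖ ^ 2)
          * Real.sqrt (∑' n : Fin d → ℤ, (1 + latNorm n) ^ (2 * s) * ‖v n‖ ^ 2) := by
  have hs0 : 0 < s := lt_of_le_of_lt (by positivity) hs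
  have hw : ∀ n : Fin d → ℤ, 0 < (1 + latNorm n) ^ s := fun n => by
    have := latNorm_nonneg n
    positivity
  have hsq : ∀ n : Fin d → ℤ, (1 + latNorm n) ^ (2 * s) = ((1 + latNorm n) ^ s) ^ 2 := fun n => by
    have := latNorm_nonneg n
    rw [← Real.rpow_mul_natCast (by positivity), mul_comm]
    norm_num
  have hS := summable_weight d s hs
  have hSpos : 0 < ∑' n : Fin d → ℤ, (((1 + latNorm n) ^ s)⁻¹) ^ 2 :=
    hS.tsum_pos (fun n => sq_nonneg _) 0 (by have := hw 0; positivity)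
  refine ⟨√(2 * ((2 : ℝ) ^ s) ^ 2 * ∑' n : Fin d → ℤ, (((1 + latNorm n) ^ s)⁻¹) ^ 2),
    Real.sqrt_pos.2 (by positivity), ?_⟩
  intro u v hu hv
  simp only [hsq] at hu hv ⊢
  obtain ⟨h1, h2, h3⟩ := conv_est (fun n : Fin d → ℤ => (1 + latNorm n) ^ s) hw
    (((2 : ℝ) ^ s) ^ 2) (by positivity) (weight_le s hs0) hS u v hu hv
  refine ⟨h1, h2, ?_⟩
  have hU : 0 ≤ ∑' n : Fin d → ℤ, ((1 + latNorm n) ^ s) ^ 2 * ‖u n‖ ^ 2 :=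
    tsum_nonneg fun n => by positivity
  rw [← Real.sqrt_mul (by positivity), ← Real.sqrt_mul (by positivity)]
  exact Real.sqrt_le_sqrt h3
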